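/- For all (ρ,ε)∈(0,1)×(0,1): g_ρ(2(1−ε)/γ) ≤ (1/2)·exp( −(ε²/16)·|ln ρ|/(1−ε) ) + exp( −(ε/2)·|ln ρ| )/(1−ρ), and g_ρ(2(1+ε)/γ) ≥ ( 1 − (1/2)·exp(−(ε²/16)·|ln ρ|) ) / ( 1 + exp(−(ε/2)·|ln ρ|) ). -/

import Mathlib

open MeasureTheory ProbabilityTheory Real

noncomputable section

namespace BernoulliPrior

/-- Standard Gaussian measure on ℝ. -/
def stdG : Measure ℝ := gaussianReal 0 1

/-- The Bernoulli prior (1−ρ)δ₀ + ρδ₁. -/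
def bern (ρ : ℝ) : Measure ℝ :=
  ENNReal.ofReal (1 - ρ) • Measure.dirac 0 + ENNReal.ofReal ρ • Measure.dirac 1

/-- ψ_ρ(r) = E[ln(1 − ρ + ρ exp(−r/2 + r X* + √r Z))]. -/
def psiB (ρ r : ℝ) : ℝ :=
  ∫ xs, ∫ z, Real.log (1 - ρ + ρ * Real.exp (-r / 2 + r * xs + Real.sqrt r * z))
    ∂stdG ∂(bern ρ)

/-- g_ρ(r) = (2/ρ) ψ_ρ'((α(ρ)/ρ) r) with α(ρ) = γρ|ln ρ|, so (α(ρ)/ρ) r = γ|ln ρ| r. -/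
def gB (γ ρ r : ℝ) : ℝ := (2 / ρ) * deriv (psiB ρ) (γ * |Real.log ρ| * r)

instance : IsProbabilityMeasure stdG := by unfold stdG; infer_instance

lemma gaussianPDFReal_std (x : ℝ) :
    gaussianPDFReal 0 1 x = (√(2 * π))⁻¹ * Real.exp (-(x ^ 2) / 2) := by
  simp [gaussianPDFReal_def]

lemma integral_stdG (f : ℝ → ℝ) : ∫ z, f z ∂stdG = ∫ z, gaussianPDFReal 0 1 z * f z := by
  simp [stdG, integral_gaussianReal_eq_integral_smul]

lemma integrable_stdG_iff (f : ℝ → ℝ) :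
    Integrable f stdG ↔ Integrable (fun z => gaussianPDFReal 0 1 z * f z) := by
  rw [stdG, gaussianReal_of_var_ne_zero _ one_ne_zero,
    integrable_withDensity_iff_integrable_smul' (measurable_gaussianPDF 0 1)
      (Filter.Eventually.of_forall fun _ => gaussianPDF_lt_top)]
  simp [toReal_gaussianPDF]

lemma stdG_real_eq (s : Set ℝ) : stdG.real s = ∫ z in s, gaussianPDFReal 0 1 z := by
  rw [measureReal_def, stdG, gaussianReal_apply_eq_integral _ one_ne_zero,
    ENNReal.toReal_ofReal (integral_nonneg fun x => gaussianPDFReal_nonneg 0 1 x)]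

lemma integrable_id_stdG : Integrable (fun z : ℝ => z) stdG :=
  (memLp_id_gaussianReal 1).integrable (by simp)

lemma integrable_stdG_of_bounded {f : ℝ → ℝ} (hf : Continuous f) {C : ℝ} (hC : ∀ x, |f x| ≤ C) :
    Integrable f stdG :=
  Integrable.of_bound hf.aestronglyMeasurable C (Filter.Eventually.of_forall hC)

lemma stdG_real_Ioi_zero : stdG.real (Set.Ioi 0) = 1 / 2 := by
  have h : ∀ x : ℝ, -(x ^ 2) / 2 = -(1 / 2) * x ^ 2 := fun x => by ring
  simp_rw [stdG_real_eq, gaussianPDFReal_std, h]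
  rw [integral_const_mul, integral_gaussian_Ioi]
  have : π / (1 / 2) = 2 * π := by ring
  rw [this]
  have : √(2 * π) ≠ 0 := by positivity
  field_simp

lemma stdG_real_Ioi_le {t : ℝ} (ht : 0 ≤ t) :
    stdG.real (Set.Ioi t) ≤ Real.exp (-(t ^ 2) / 2) / 2 := by
  have hint := integrable_gaussianPDFReal 0 1
  have h1 : stdG.real (Set.Ioi t) = ∫ x in Set.Ioi 0, gaussianPDFReal 0 1 (x + t) := by
    rw [stdG_real_eq]
    have := (measurePreserving_add_right volume t).setIntegral_preimage_emb
      (measurableEmbedding_addRight t) (gaussianPDFReal 0 1) (Set.Ioi t)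
    rw [← this]
    simp
  have h2 : Real.exp (-(t ^ 2) / 2) / 2
      = ∫ x in Set.Ioi 0, Real.exp (-(t ^ 2) / 2) * gaussianPDFReal 0 1 x := by
    rw [integral_const_mul, ← stdG_real_eq, stdG_real_Ioi_zero]; ring
  rw [h1, h2]
  refine setIntegral_mono_on (hint.comp_add_right t).integrableOn (hint.const_mul _).integrableOn
    measurableSet_Ioi fun x hx => ?_
  rw [gaussianPDFReal_std, gaussianPDFReal_std, mul_left_comm, ← Real.exp_add]
  gcongr
  nlinarith [mul_nonneg (le_of_lt (Set.mem_Ioi.1 hx)) ht]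

lemma stdG_real_Iio_neg (t : ℝ) : stdG.real (Set.Iio (-t)) = stdG.real (Set.Ioi t) := by
  have h : stdG = stdG.map (fun x => -x) := by
    simp [stdG, gaussianReal_map_neg]
  conv_lhs => rw [h]
  rw [map_measureReal_apply measurable_neg measurableSet_Iio]
  congr 1
  ext x
  simp

lemma integral_one_sub_sq (t : ℝ) : ∫ x in (0 : ℝ)..t, (1 - x ^ 2 / 2) = t - t ^ 3 / 6 := by
  rw [intervalIntegral.integral_sub (by simp) (Continuous.intervalIntegrable (by fun_prop) _ _),
    intervalIntegral.integral_div]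
  simp
  ring

lemma stdG_real_Ioi_le_sub {t : ℝ} (ht : 0 ≤ t) :
    stdG.real (Set.Ioi t) ≤ 1 / 2 - (√(2 * π))⁻¹ * (t - t ^ 3 / 6) := by
  have hint := integrable_gaussianPDFReal 0 1
  have hsplit : stdG.real (Set.Ioi 0) = stdG.real (Set.Ioc 0 t) + stdG.real (Set.Ioi t) := by
    rw [← Set.Ioc_union_Ioi_eq_Ioi ht,
      measureReal_union (Set.Ioc_disjoint_Ioi le_rfl) measurableSet_Ioi]
  have hlow : (√(2 * π))⁻¹ * (t - t ^ 3 / 6) ≤ stdG.real (Set.Ioc 0 t) := by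
    rw [stdG_real_eq, ← intervalIntegral.integral_of_le ht, ← integral_one_sub_sq,
      ← intervalIntegral.integral_const_mul]
    refine intervalIntegral.integral_mono_on ht (Continuous.intervalIntegrable (by fun_prop) _ _)
      hint.intervalIntegrable fun x _ => ?_
    rw [gaussianPDFReal_std]
    gcongr
    linarith [Real.add_one_le_exp (-(x ^ 2) / 2)]
  rw [stdG_real_Ioi_zero] at hsplit
  linarith

lemma inv_sqrt_two_pi_ge : (0.39 : ℝ) ≤ (√(2 * π))⁻¹ := by
  rw [le_inv_comm₀ (by norm_num) (by positivity)]
  apply Real.sqrt_le_iff.2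
  constructor
  · norm_num
  · nlinarith [Real.pi_lt_d2]

lemma stdG_real_Ioi_le_exp_neg_sq {t : ℝ} (ht : 0 ≤ t) (ht' : t ^ 2 ≤ 0.7) :
    stdG.real (Set.Ioi t) ≤ Real.exp (-(t ^ 2)) / 2 := by
  have h1 := stdG_real_Ioi_le_sub ht
  have hexp : 1 - t ^ 2 + t ^ 4 / 2 - 2 / 9 * t ^ 6 ≤ Real.exp (-(t ^ 2)) := by
    have habs : |-(t ^ 2)| = t ^ 2 := by rw [abs_neg, abs_of_nonneg (sq_nonneg t)]
    have h := (abs_le.1 (Real.exp_bound (x := -(t ^ 2)) (by rw [habs]; linarith)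
      (n := 3) (by norm_num))).1
    rw [habs] at h
    norm_num [Finset.sum_range_succ, Nat.factorial] at h
    nlinarith
  have ht1 : t ≤ 0.84 := by nlinarith
  have hpi : 0.39 * (t - t ^ 3 / 6) ≤ (√(2 * π))⁻¹ * (t - t ^ 3 / 6) := by
    apply mul_le_mul_of_nonneg_right inv_sqrt_two_pi_ge
    nlinarith
  have hpoly : t - t ^ 3 / 2 + 2 / 9 * t ^ 5 ≤ 0.78 * (1 - t ^ 2 / 6) := by
    have ha : 0 ≤ t ^ 3 * (0.7 - t ^ 2) := mul_nonneg (by positivity) (by linarith)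
    have hb : 0 ≤ (t - 0.84) ^ 2 * (t + 1.68) := by positivity
    nlinarith
  nlinarith [mul_le_mul_of_nonneg_left hpoly ht]

/-- The log-partition function `y ↦ ln(1 − ρ + ρ eʸ)`. -/
def logPart (ρ y : ℝ) : ℝ := Real.log (1 - ρ + ρ * Real.exp y)

/-- The posterior probability of the atom `1` given the log-likelihood ratio `y`. -/
def post (ρ y : ℝ) : ℝ := ρ * Real.exp y / (1 - ρ + ρ * Real.exp y)

section Posterior

variable {ρ : ℝ}

lemma partition_pos (hρ : ρ ∈ Set.Ioo (0 : ℝ) 1) (y : ℝ) : 0 < 1 - ρ + ρ * Real.exp y := by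
  have := mul_pos hρ.1 (Real.exp_pos y)
  linarith [hρ.2]

lemma post_nonneg (hρ : ρ ∈ Set.Ioo (0 : ℝ) 1) (y : ℝ) : 0 ≤ post ρ y :=
  div_nonneg (mul_nonneg hρ.1.le (Real.exp_pos y).le) (partition_pos hρ y).le

lemma post_le_one (hρ : ρ ∈ Set.Ioo (0 : ℝ) 1) (y : ℝ) : post ρ y ≤ 1 := by
  rw [post, div_le_one (partition_pos hρ y)]
  linarith [hρ.2]

lemma abs_post_le_one (hρ : ρ ∈ Set.Ioo (0 : ℝ) 1) (y : ℝ) : |post ρ y| ≤ 1 :=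
  abs_le.2 ⟨by linarith [post_nonneg hρ y], post_le_one hρ y⟩

lemma hasDerivAt_partition (y : ℝ) :
    HasDerivAt (fun y => 1 - ρ + ρ * Real.exp y) (ρ * Real.exp y) y :=
  ((Real.hasDerivAt_exp y).const_mul ρ).const_add _

lemma hasDerivAt_logPart (hρ : ρ ∈ Set.Ioo (0 : ℝ) 1) (y : ℝ) :
    HasDerivAt (logPart ρ) (post ρ y) y :=
  (hasDerivAt_partition y).log (partition_pos hρ y).ne'

lemma hasDerivAt_post (hρ : ρ ∈ Set.Ioo (0 : ℝ) 1) (y : ℝ) :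
    HasDerivAt (post ρ) (post ρ y * (1 - post ρ y)) y := by
  have hne := (partition_pos hρ y).ne'
  convert! ((Real.hasDerivAt_exp y).const_mul ρ).fun_div (hasDerivAt_partition y) hne using 1
  unfold post
  field_simp

lemma continuous_logPart (hρ : ρ ∈ Set.Ioo (0 : ℝ) 1) : Continuous (logPart ρ) :=
  continuous_iff_continuousAt.2 fun y => (hasDerivAt_logPart hρ y).continuousAt

lemma continuous_post (hρ : ρ ∈ Set.Ioo (0 : ℝ) 1) : Continuous (post ρ) :=
  continuous_iff_continuousAt.2 fun y => (hasDerivAt_post hρ y).continuousAt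

lemma abs_logPart_le (hρ : ρ ∈ Set.Ioo (0 : ℝ) 1) (y : ℝ) : |logPart ρ y| ≤ |y| := by
  have hpos := partition_pos hρ y
  obtain ⟨h0, h1⟩ := hρ
  rw [abs_le]
  constructor
  · rw [logPart, Real.le_log_iff_exp_le hpos]
    have ha : Real.exp (-|y|) ≤ Real.exp y := Real.exp_le_exp.2 (neg_abs_le y)
    have hb : Real.exp (-|y|) ≤ 1 := Real.exp_le_one_iff.2 (by simp)
    nlinarith
  · rw [logPart, Real.log_le_iff_le_exp hpos]
    have ha : Real.exp y ≤ Real.exp |y| := Real.exp_le_exp.2 (le_abs_self y)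
    have hb : 1 ≤ Real.exp |y| := Real.one_le_exp (abs_nonneg y)
    nlinarith

lemma exp_neg_mul_post_sq (hρ : ρ ∈ Set.Ioo (0 : ℝ) 1) (y : ℝ) :
    (1 - ρ) * (Real.exp (-y) * post ρ y ^ 2) = ρ * (post ρ y * (1 - post ρ y)) := by
  have hne := (partition_pos hρ y).ne'
  rw [Real.exp_neg]
  unfold post
  have := (Real.exp_pos y).ne'
  field_simp
  ring

end Posterior

lemma hasDerivAt_gaussianPDFReal_std (x : ℝ) :
    HasDerivAt (gaussianPDFReal 0 1) (-x * gaussianPDFReal 0 1 x) x := by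
  have h : gaussianPDFReal 0 1 = fun x => (√(2 * π))⁻¹ * Real.exp (-(x ^ 2) / 2) :=
    funext gaussianPDFReal_std
  have hd : HasDerivAt (fun x : ℝ => -(x ^ 2) / 2) (-x) x := by
    convert! ((hasDerivAt_pow 2 x).fun_neg.div_const 2) using 1
    simp
    ring
  rw [gaussianPDFReal_std, h]
  convert! (hd.exp.const_mul (√(2 * π))⁻¹) using 1
  ring

/-- Gaussian integration by parts (Stein's identity) for bounded functions. -/
lemma integral_mul_stdG {f f' : ℝ → ℝ} (hf : ∀ x, HasDerivAt f (f' x) x)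
    {C : ℝ} (hC : ∀ x, |f x| ≤ C) (hf' : Integrable f' stdG) :
    ∫ z, z * f z ∂stdG = ∫ z, f' z ∂stdG := by
  have hcont : Continuous f := continuous_iff_continuousAt.2 fun x => (hf x).continuousAt
  have hzf : Integrable (fun z => z * f z) stdG :=
    integrable_id_stdG.mul_bdd hcont.aestronglyMeasurable (Filter.Eventually.of_forall hC)
  have key := integral_mul_deriv_eq_deriv_mul_of_integrable (u := f) (u' := f')
    (v := gaussianPDFReal 0 1) (v' := fun x => -x * gaussianPDFReal 0 1 x)
    (fun x _ => hf x) (fun x _ => hasDerivAt_gaussianPDFReal_std x)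
    (by
      refine ((integrable_stdG_iff _).1 hzf).neg.congr (Filter.Eventually.of_forall fun x => ?_)
      simp only [Pi.neg_apply, Pi.mul_apply]
      ring)
    (by
      refine ((integrable_stdG_iff _).1 hf').congr (Filter.Eventually.of_forall fun x => ?_)
      simp only [Pi.mul_apply]
      ring)
    (by
      refine ((integrable_stdG_iff _).1 (integrable_stdG_of_bounded hcont hC)).congr
        (Filter.Eventually.of_forall fun x => ?_)
      simp only [Pi.mul_apply]
      ring)
  rw [integral_stdG, integral_stdG, ← neg_inj]
  calc -∫ z, gaussianPDFReal 0 1 z * (z * f z) = ∫ z, f z * (-z * gaussianPDFReal 0 1 z) := by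
        rw [← integral_neg]; congr 1; ext z; ring
    _ = -∫ z, f' z * gaussianPDFReal 0 1 z := key
    _ = _ := by congr 2; ext z; ring

lemma integral_stdG_shift (f : ℝ → ℝ) (s : ℝ) :
    ∫ z, f z ∂stdG = ∫ z, Real.exp (-(s ^ 2) / 2 - s * z) * f (z + s) ∂stdG := by
  rw [integral_stdG, integral_stdG, ← integral_add_right_eq_self _ s]
  congr 1
  ext z
  rw [← mul_assoc]
  congr 1
  rw [gaussianPDFReal_std, gaussianPDFReal_std, mul_assoc, ← Real.exp_add]
  congr 2
  ring

lemma hasDerivAt_integral_logPart {ρ : ℝ} (hρ : ρ ∈ Set.Ioo (0 : ℝ) 1) (c : ℝ) {r : ℝ}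
    (hr : 0 < r) :
    HasDerivAt (fun r => ∫ z, logPart ρ (c * r + √r * z) ∂stdG)
      (∫ z, post ρ (c * r + √r * z) * (c + z / (2 * √r)) ∂stdG) r := by
  have hcl := continuous_logPart hρ
  have hcp := continuous_post hρ
  have hzabs : Integrable (fun z : ℝ => |z|) stdG := integrable_id_stdG.abs
  refine (hasDerivAt_integral_of_dominated_loc_of_deriv_le (s := Set.Ioi (r / 2))
    (bound := fun z => |c| + |z| / (2 * √(r / 2)))
    (F := fun r z => logPart ρ (c * r + √r * z))
    (F' := fun r z => post ρ (c * r + √r * z) * (c + z / (2 * √r)))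
    (Ioi_mem_nhds (by linarith)) ?_ ?_ ?_ ?_ ?_ ?_).2
  · exact Filter.Eventually.of_forall fun x =>
      Continuous.aestronglyMeasurable (by fun_prop)
  · refine ((integrable_const |c * r|).add (hzabs.const_mul √r)).mono'
      (Continuous.aestronglyMeasurable (by fun_prop)) (Filter.Eventually.of_forall fun z => ?_)
    rw [Real.norm_eq_abs]
    refine (abs_logPart_le hρ _).trans ((abs_add_le _ _).trans ?_)
    simp [abs_mul, abs_of_nonneg (Real.sqrt_nonneg r)]
  · exact Continuous.aestronglyMeasurable (by fun_prop)
  · refine Filter.Eventually.of_forall fun z x hx => ?_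
    have hx : r / 2 < x := hx
    have hs : 0 < √(r / 2) := Real.sqrt_pos.2 (by linarith)
    rw [Real.norm_eq_abs, abs_mul]
    calc |post ρ (c * x + √x * z)| * |c + z / (2 * √x)| ≤ 1 * |c + z / (2 * √x)| := by
          gcongr; exact abs_post_le_one hρ _
      _ ≤ |c| + |z / (2 * √x)| := by rw [one_mul]; exact abs_add_le _ _
      _ = |c| + |z| / (2 * √x) := by
          rw [abs_div, abs_of_nonneg (by positivity : 0 ≤ 2 * √x)]
      _ ≤ _ := by gcongr
  · exact (integrable_const _).add (hzabs.div_const _)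
  · refine Filter.Eventually.of_forall fun z x hx => ?_
    have hx : r / 2 < x := hx
    have hx0 : x ≠ 0 := by linarith
    have hin : HasDerivAt (fun x => c * x + √x * z) (c + z / (2 * √x)) x := by
      convert! ((hasDerivAt_id' x).const_mul c).fun_add
        ((Real.hasDerivAt_sqrt hx0).mul_const z) using 1
      ring
    exact (hasDerivAt_logPart hρ _).comp x hin

lemma hasDerivAt_integral_logPart_of_stein {ρ : ℝ} (hρ : ρ ∈ Set.Ioo (0 : ℝ) 1) (c : ℝ) {r : ℝ}
    (hr : 0 < r) :
    HasDerivAt (fun r => ∫ z, logPart ρ (c * r + √r * z) ∂stdG)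
      ((c + 1 / 2) * (∫ z, post ρ (c * r + √r * z) ∂stdG)
        - 1 / 2 * ∫ z, post ρ (c * r + √r * z) ^ 2 ∂stdG) r := by
  have hcp := continuous_post hρ
  have hs : √r ≠ 0 := (Real.sqrt_pos.2 hr).ne'
  have hp : Integrable (fun z => post ρ (c * r + √r * z)) stdG :=
    integrable_stdG_of_bounded (by fun_prop) fun z => abs_post_le_one hρ _
  have hp2 : Integrable (fun z => post ρ (c * r + √r * z) ^ 2) stdG := by
    refine integrable_stdG_of_bounded (C := 1) (by fun_prop) fun z => ?_
    rw [abs_pow]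
    exact pow_le_one₀ (abs_nonneg _) (abs_post_le_one hρ _)
  have hderiv : ∀ z, HasDerivAt (fun z => post ρ (c * r + √r * z))
      (√r * (post ρ (c * r + √r * z) - post ρ (c * r + √r * z) ^ 2)) z := by
    intro z
    have hin : HasDerivAt (fun z => c * r + √r * z) √r z := by
      simpa using ((hasDerivAt_id' z).const_mul √r).const_add (c * r)
    convert! (hasDerivAt_post hρ _).comp z hin using 1
    ring
  have hstein := integral_mul_stdG hderiv (fun z => abs_post_le_one hρ _)
    ((hp.sub hp2).const_mul √r)
  rw [integral_const_mul, integral_sub hp hp2] at hstein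
  have hzp : Integrable (fun z => z * post ρ (c * r + √r * z)) stdG :=
    integrable_id_stdG.mul_bdd (c := 1) (Continuous.aestronglyMeasurable (by fun_prop))
      (Filter.Eventually.of_forall fun z => abs_post_le_one hρ _)
  convert! hasDerivAt_integral_logPart hρ c hr using 1
  have hsplit : ∀ z, post ρ (c * r + √r * z) * (c + z / (2 * √r))
      = c * post ρ (c * r + √r * z) + 1 / (2 * √r) * (z * post ρ (c * r + √r * z)) := by
    intro z; ring
  simp_rw [hsplit]
  rw [integral_add (hp.const_mul c) (hzp.const_mul _), integral_const_mul, integral_const_mul,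
    hstein]
  field_simp
  ring

lemma psiB_eq {ρ : ℝ} (hρ : ρ ∈ Set.Ioo (0 : ℝ) 1) (r : ℝ) :
    psiB ρ r = (1 - ρ) * (∫ z, logPart ρ (-(1 / 2) * r + √r * z) ∂stdG)
      + ρ * ∫ z, logPart ρ (1 / 2 * r + √r * z) ∂stdG := by
  unfold psiB bern
  rw [integral_add_measure, integral_smul_measure, integral_smul_measure, integral_dirac,
    integral_dirac, ENNReal.toReal_ofReal (by linarith [hρ.2]), ENNReal.toReal_ofReal hρ.1.le]
  · have h0 : ∀ z, -r / 2 + r * 0 + √r * z = -(1 / 2) * r + √r * z := fun z => by ring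
    have h1 : ∀ z, -r / 2 + r * 1 + √r * z = 1 / 2 * r + √r * z := fun z => by ring
    simp only [smul_eq_mul, logPart, h0, h1]
  · exact (integrable_dirac (by simp)).smul_measure ENNReal.ofReal_ne_top
  · exact (integrable_dirac (by simp)).smul_measure ENNReal.ofReal_ne_top

/-- `ψ_ρ'(r) = (ρ/2) E[post]`, the expectation being taken under the law of the observation
given `X* = 1`. -/
lemma hasDerivAt_psiB {ρ : ℝ} (hρ : ρ ∈ Set.Ioo (0 : ℝ) 1) {r : ℝ} (hr : 0 < r) :
    HasDerivAt (psiB ρ) (ρ / 2 * ∫ z, post ρ (1 / 2 * r + √r * z) ∂stdG) r := by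
  have hcp := continuous_post hρ
  have hp : Integrable (fun z => post ρ (1 / 2 * r + √r * z)) stdG :=
    integrable_stdG_of_bounded (by fun_prop) fun z => abs_post_le_one hρ _
  have hp2 : Integrable (fun z => post ρ (1 / 2 * r + √r * z) ^ 2) stdG := by
    refine integrable_stdG_of_bounded (C := 1) (by fun_prop) fun z => ?_
    rw [abs_pow]
    exact pow_le_one₀ (abs_nonneg _) (abs_post_le_one hρ _)
  have htilt : (1 - ρ) * ∫ z, post ρ (-(1 / 2) * r + √r * z) ^ 2 ∂stdG
      = ρ * ((∫ z, post ρ (1 / 2 * r + √r * z) ∂stdG)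
        - ∫ z, post ρ (1 / 2 * r + √r * z) ^ 2 ∂stdG) := by
    rw [integral_stdG_shift _ √r, ← integral_sub hp hp2, ← integral_const_mul,
      ← integral_const_mul]
    congr 1
    ext z
    have hsq : √r ^ 2 = r := Real.sq_sqrt hr.le
    have he : -(√r ^ 2) / 2 - √r * z = -(1 / 2 * r + √r * z) := by rw [hsq]; ring
    have ha : -(1 / 2) * r + √r * (z + √r) = 1 / 2 * r + √r * z := by linear_combination hsq
    rw [he, ha, exp_neg_mul_post_sq hρ]
    ring
  rw [funext (psiB_eq hρ)]
  convert! ((hasDerivAt_integral_logPart_of_stein hρ (-(1 / 2)) hr).const_mul (1 - ρ)).fun_add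
    ((hasDerivAt_integral_logPart_of_stein hρ (1 / 2) hr).const_mul ρ) using 1
  linear_combination (1 / 2) * htilt

lemma gB_two_mul_div {γ ρ a : ℝ} (hγ : 0 < γ) (hρ : ρ ∈ Set.Ioo (0 : ℝ) 1) (ha : 0 < a) :
    gB γ ρ (2 * a / γ)
      = ∫ z, post ρ (a * |Real.log ρ| + √(2 * a * |Real.log ρ|) * z) ∂stdG := by
  have hL : 0 < |Real.log ρ| := abs_pos.2 (Real.log_neg hρ.1 hρ.2).ne
  have harg : γ * |Real.log ρ| * (2 * a / γ) = 2 * a * |Real.log ρ| := by field_simp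
  have hhalf : 1 / 2 * (2 * a * |Real.log ρ|) = a * |Real.log ρ| := by ring
  have hρ0 := hρ.1.ne'
  rw [gB, harg, (hasDerivAt_psiB hρ (by positivity)).deriv, hhalf]
  field_simp

section PosteriorBounds

variable {ρ : ℝ}

lemma exp_neg_abs_log (hρ : ρ ∈ Set.Ioo (0 : ℝ) 1) : Real.exp (-|Real.log ρ|) = ρ := by
  rw [abs_of_neg (Real.log_neg hρ.1 hρ.2), neg_neg, Real.exp_log hρ.1]

lemma mul_exp_eq (hρ : ρ ∈ Set.Ioo (0 : ℝ) 1) (y : ℝ) :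
    ρ * Real.exp y = Real.exp (y - |Real.log ρ|) := by
  nth_rewrite 1 [← exp_neg_abs_log hρ]
  rw [← Real.exp_add]
  congr 1
  ring

lemma post_le (hρ : ρ ∈ Set.Ioo (0 : ℝ) 1) (y : ℝ) :
    post ρ y ≤ Real.exp (y - |Real.log ρ|) / (1 - ρ) := by
  have h1 : 0 < 1 - ρ := by linarith [hρ.2]
  rw [post, mul_exp_eq hρ]
  gcongr
  linarith [Real.exp_pos (y - |Real.log ρ|)]

lemma le_post (hρ : ρ ∈ Set.Ioo (0 : ℝ) 1) (y : ℝ) :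
    1 / (1 + Real.exp (|Real.log ρ| - y)) ≤ post ρ y := by
  have hw := Real.exp_pos (y - |Real.log ρ|)
  have h1 : 0 < 1 - ρ := by linarith [hρ.2]
  have hneg : Real.exp (|Real.log ρ| - y) = (Real.exp (y - |Real.log ρ|))⁻¹ := by
    rw [← Real.exp_neg]; congr 1; ring
  rw [post, mul_exp_eq hρ, hneg, div_le_div_iff₀ (by positivity) (by positivity)]
  have hmul : Real.exp (y - |Real.log ρ|) * (1 + (Real.exp (y - |Real.log ρ|))⁻¹)
      = Real.exp (y - |Real.log ρ|) + 1 := by field_simp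
  rw [hmul]
  linarith [hρ.1]

lemma one_sub_post_le (hρ : ρ ∈ Set.Ioo (0 : ℝ) 1) {κ : ℝ} (hκ0 : 0 ≤ κ) (hκ1 : κ ≤ 1)
    (y : ℝ) : 1 - post ρ y ≤ Real.exp (κ * (|Real.log ρ| - y)) := by
  rcases le_total 0 (|Real.log ρ| - y) with h | h
  · linarith [post_nonneg hρ y, Real.one_le_exp (mul_nonneg hκ0 h)]
  · have hle := le_post hρ y
    have hv := Real.exp_pos (|Real.log ρ| - y)
    have hmono : Real.exp (|Real.log ρ| - y) ≤ Real.exp (κ * (|Real.log ρ| - y)) :=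
      Real.exp_le_exp.2 (by nlinarith)
    have hfrac : 1 - Real.exp (|Real.log ρ| - y) ≤ 1 / (1 + Real.exp (|Real.log ρ| - y)) := by
      rw [le_div_iff₀ (by positivity)]
      nlinarith
    linarith

lemma integrable_post_affine (hρ : ρ ∈ Set.Ioo (0 : ℝ) 1) (m s : ℝ) :
    Integrable (fun z => post ρ (m + s * z)) stdG := by
  have hcp := continuous_post hρ
  exact integrable_stdG_of_bounded (by fun_prop) fun z => abs_post_le_one hρ _

lemma integral_post_le (hρ : ρ ∈ Set.Ioo (0 : ℝ) 1) (m t : ℝ) {s : ℝ} (hs : 0 ≤ s) :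
    ∫ z, post ρ (m + s * z) ∂stdG
      ≤ stdG.real (Set.Ioi t) + Real.exp (m + s * t - |Real.log ρ|) / (1 - ρ) := by
  set b := Real.exp (m + s * t - |Real.log ρ|) / (1 - ρ) with hb
  have hρ1 : 0 < 1 - ρ := by linarith [hρ.2]
  have hb0 : 0 ≤ b := by positivity
  have hind : Integrable ((Set.Ioi t).indicator fun _ => (1 : ℝ)) stdG :=
    (integrable_const 1).indicator measurableSet_Ioi
  calc ∫ z, post ρ (m + s * z) ∂stdG
      ≤ ∫ z, ((Set.Ioi t).indicator (fun _ => (1 : ℝ)) z + b) ∂stdG := by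
        refine integral_mono (integrable_post_affine hρ m s) (hind.add (integrable_const b))
          fun z => ?_
        by_cases hz : z ∈ Set.Ioi t
        · simp only [Set.indicator_of_mem hz]
          linarith [post_le_one hρ (m + s * z)]
        · simp only [Set.indicator_of_notMem hz, zero_add]
          refine (post_le hρ _).trans ?_
          rw [hb]
          gcongr
          exact not_lt.1 hz
    _ = stdG.real (Set.Ioi t) + b := by
        rw [integral_add hind (integrable_const b), integral_indicator measurableSet_Ioi]
        simp

lemma le_integral_post (hρ : ρ ∈ Set.Ioo (0 : ℝ) 1) (m t : ℝ) {s : ℝ} (hs : 0 ≤ s) :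
    (1 - stdG.real (Set.Ioi t)) / (1 + Real.exp (|Real.log ρ| - (m - s * t)))
      ≤ ∫ z, post ρ (m + s * z) ∂stdG := by
  set b := 1 / (1 + Real.exp (|Real.log ρ| - (m - s * t))) with hb
  calc (1 - stdG.real (Set.Ioi t)) / (1 + Real.exp (|Real.log ρ| - (m - s * t)))
      = ∫ z, (Set.Iio (-t))ᶜ.indicator (fun _ => b) z ∂stdG := by
        rw [integral_indicator measurableSet_Iio.compl, setIntegral_const,
          probReal_compl_eq_one_sub measurableSet_Iio, stdG_real_Iio_neg, smul_eq_mul, hb]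
        ring
    _ ≤ ∫ z, post ρ (m + s * z) ∂stdG := by
        refine integral_mono ((integrable_const b).indicator measurableSet_Iio.compl)
          (integrable_post_affine hρ m s) fun z => ?_
        by_cases hz : z ∈ (Set.Iio (-t))ᶜ
        · simp only [Set.indicator_of_mem hz]
          refine le_trans ?_ (le_post hρ _)
          have hz' : -t ≤ z := not_lt.1 hz
          rw [hb]
          gcongr
          nlinarith
        · simp only [Set.indicator_of_notMem hz]
          exact post_nonneg hρ _

lemma one_sub_exp_le_integral_post (hρ : ρ ∈ Set.Ioo (0 : ℝ) 1) (m s : ℝ) {κ : ℝ}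
    (hκ0 : 0 ≤ κ) (hκ1 : κ ≤ 1) :
    1 - Real.exp (κ * (|Real.log ρ| - m) + κ ^ 2 * s ^ 2 / 2)
      ≤ ∫ z, post ρ (m + s * z) ∂stdG := by
  have hexp : Integrable (fun z => Real.exp (-(κ * s) * z)) stdG :=
    integrable_exp_mul_gaussianReal _
  have hmgf : ∫ z, Real.exp (-(κ * s) * z) ∂stdG = Real.exp (κ ^ 2 * s ^ 2 / 2) := by
    have h := congrFun (mgf_id_gaussianReal (μ := 0) (v := 1)) (-(κ * s))
    simp only [mgf, id] at h
    rw [stdG, h]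
    congr 1
    push_cast
    ring
  have hpt : ∀ z, 1 - post ρ (m + s * z)
      ≤ Real.exp (κ * (|Real.log ρ| - m)) * Real.exp (-(κ * s) * z) := by
    intro z
    refine (one_sub_post_le hρ hκ0 hκ1 _).trans_eq ?_
    rw [← Real.exp_add]
    congr 1
    ring
  have hint := integral_mono ((integrable_const 1).sub (integrable_post_affine hρ m s))
    (hexp.const_mul (Real.exp (κ * (|Real.log ρ| - m)))) hpt
  have hsub : ∫ z, (1 - post ρ (m + s * z)) ∂stdG = 1 - ∫ z, post ρ (m + s * z) ∂stdG := by
    rw [integral_sub (integrable_const 1) (integrable_post_affine hρ m s)]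
    simp
  simp only [Pi.sub_apply] at hint
  rw [hsub, integral_const_mul, hmgf, ← Real.exp_add] at hint
  linarith

end PosteriorBounds

/-- Lemma 2 of the paper: bounds on g_ρ for the Bernoulli prior. -/
theorem gB_bounds (γ : ℝ) (hγ : 0 < γ) :
    ∀ ρ ∈ Set.Ioo (0 : ℝ) 1, ∀ ε ∈ Set.Ioo (0 : ℝ) 1,
      gB γ ρ (2 * (1 - ε) / γ)
        ≤ Real.exp (-(ε ^ 2 / 16) * (|Real.log ρ| / (1 - ε))) / 2
          + Real.exp (-(ε / 2) * |Real.log ρ|) / (1 - ρ) ∧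
      (1 - Real.exp (-(ε ^ 2 / 16) * |Real.log ρ|) / 2)
          / (1 + Real.exp (-(ε / 2) * |Real.log ρ|))
        ≤ gB γ ρ (2 * (1 + ε) / γ) := by
  intro ρ hρ ε hε
  have hε0 := hε.1
  have hε1 := hε.2
  have h1ε : 0 < 1 - ε := by linarith
  rw [gB_two_mul_div hγ hρ h1ε, gB_two_mul_div hγ hρ (by linarith : 0 < 1 + ε)]
  have hL : 0 < |Real.log ρ| := abs_pos.2 (Real.log_neg hρ.1 hρ.2).ne
  constructor
  · have hsq : √(2 * (1 - ε) * |Real.log ρ|) ^ 2 = 2 * (1 - ε) * |Real.log ρ| :=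
      Real.sq_sqrt (by positivity)
    have hs : 0 < √(2 * (1 - ε) * |Real.log ρ|) := Real.sqrt_pos.2 (by positivity)
    set s := √(2 * (1 - ε) * |Real.log ρ|)
    have htail := stdG_real_Ioi_le (t := ε / 2 * |Real.log ρ| / s) (by positivity)
    have hbd := integral_post_le hρ ((1 - ε) * |Real.log ρ|) (ε / 2 * |Real.log ρ| / s) hs.le
    have hexp1 : -((ε / 2 * |Real.log ρ| / s) ^ 2) / 2
        = -(ε ^ 2 / 16) * (|Real.log ρ| / (1 - ε)) := by
      rw [div_pow, hsq]
      field_simp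
      ring
    have hexp2 : (1 - ε) * |Real.log ρ| + s * (ε / 2 * |Real.log ρ| / s) - |Real.log ρ|
        = -(ε / 2) * |Real.log ρ| := by
      field_simp
      ring
    rw [hexp1] at htail
    rw [hexp2] at hbd
    linarith
  · have hsq : √(2 * (1 + ε) * |Real.log ρ|) ^ 2 = 2 * (1 + ε) * |Real.log ρ| :=
      Real.sq_sqrt (by positivity)
    have hs : 0 < √(2 * (1 + ε) * |Real.log ρ|) := Real.sqrt_pos.2 (by positivity)
    set s := √(2 * (1 + ε) * |Real.log ρ|)
    set D := ε ^ 2 / 16 * |Real.log ρ| with hD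
    have hD0 : 0 ≤ D := by positivity
    have hDneg : -(ε ^ 2 / 16) * |Real.log ρ| = -D := by rw [hD]; ring
    rw [hDneg]
    rcases le_total D 0.7 with hsmall | hlarge
    · have hbd := le_integral_post hρ ((1 + ε) * |Real.log ρ|) (ε / 2 * |Real.log ρ| / s) hs.le
      have hexp : |Real.log ρ| - ((1 + ε) * |Real.log ρ| - s * (ε / 2 * |Real.log ρ| / s))
          = -(ε / 2) * |Real.log ρ| := by
        field_simp
        ring
      have hsqrtD : √D ^ 2 = D := Real.sq_sqrt hD0
      have ht : √D ≤ ε / 2 * |Real.log ρ| / s := by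
        refine Real.sqrt_le_iff.2 ⟨by positivity, ?_⟩
        rw [div_pow, hsq, le_div_iff₀ (by positivity), hD]
        nlinarith [mul_pos (mul_pos (pow_pos hε0 2) (pow_pos hL 2)) h1ε]
      have htail := stdG_real_Ioi_le_exp_neg_sq (Real.sqrt_nonneg D) (by rw [hsqrtD]; exact hsmall)
      rw [hsqrtD] at htail
      have hmono : stdG.real (Set.Ioi (ε / 2 * |Real.log ρ| / s)) ≤ stdG.real (Set.Ioi √D) :=
        measureReal_mono (Set.Ioi_subset_Ioi ht)
      rw [hexp] at hbd
      refine le_trans ?_ hbd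
      gcongr
      linarith
    · have hκ1 : ε / (2 * (1 + ε)) ≤ 1 := by
        rw [div_le_one (by positivity)]
        linarith
      have hbd := one_sub_exp_le_integral_post hρ ((1 + ε) * |Real.log ρ|) s
        (κ := ε / (2 * (1 + ε))) (by positivity) hκ1
      have hexp : ε / (2 * (1 + ε)) * (|Real.log ρ| - (1 + ε) * |Real.log ρ|)
          + (ε / (2 * (1 + ε))) ^ 2 * s ^ 2 / 2 ≤ -D + -D := by
        have heq : ε / (2 * (1 + ε)) * (|Real.log ρ| - (1 + ε) * |Real.log ρ|)
            + (ε / (2 * (1 + ε))) ^ 2 * s ^ 2 / 2 = -(ε ^ 2 * |Real.log ρ| / (4 * (1 + ε))) := by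
          rw [hsq]
          field_simp
          ring
        have hle : ε ^ 2 * |Real.log ρ| / 8 ≤ ε ^ 2 * |Real.log ρ| / (4 * (1 + ε)) := by
          gcongr
          linarith
        rw [heq, hD]
        linarith
      have hhalf : Real.exp (-D) ≤ 1 / 2 := by
        rw [← Real.le_log_iff_exp_le (by norm_num), one_div, Real.log_inv]
        linarith [Real.log_two_lt_d9]
      have hexp' := Real.exp_le_exp.2 hexp
      rw [Real.exp_add (-D)] at hexp'
      have hpos := Real.exp_pos (-D)
      calc (1 - Real.exp (-D) / 2) / (1 + Real.exp (-(ε / 2) * |Real.log ρ|))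
          ≤ 1 - Real.exp (-D) / 2 :=
            div_le_self (by linarith) (by linarith [Real.exp_pos (-(ε / 2) * |Real.log ρ|)])
        _ ≤ _ := by nlinarith

end BernoulliPrior
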